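/- arXiv:2212.12900 — 3 statements merged into one kernel-verified Lean document; each statement's English description precedes it below -/
import Mathlib

section
/- Let $R_1$ be a commutative ring with unity with $|R_1| \geq 5$, and choose distinct elements $u_1, u_2, u_3 \in R_1 \setminus \{0,1\}$. Then $\Gamma'(R_1 \times \mathbb{Z}_2 \times \mathbb{Z}_2)$ contains $K_{5,5}$ as a subgraph, with parts $\{(0,1,0), (u_1,1,0), (u_2,1,0), (u_3,1,0), (1,1,0)\}$ and $\{(0,0,1), (u_1,0,1), (u_2,0,1), (u_3,0,1), (1,0,1)\}$. -/
/-- Adjacency in the cozero-divisor graph `Γ'(R)`: both elements are vertices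
(non-zero non-units) and neither lies in the principal ideal generated by the
other. -/
def cozeroAdj {R : Type*} [CommRing R] (x y : R) : Prop :=
  (x ≠ 0 ∧ ¬ IsUnit x) ∧ (y ≠ 0 ∧ ¬ IsUnit y) ∧
    x ∉ Ideal.span {y} ∧ y ∉ Ideal.span {x}

/-!
Mutual non-divisibility already forces both elements to be non-zero non-units, so adjacency is
incomparability for divisibility. Ring homomorphisms preserve divisibility, hence adjacency can be
tested after projecting to the last two factors, where `(1, 0)` and `(0, 1)` are incomparable.
-/

theorem cozeroAdj_iff_not_dvd {R : Type*} [CommRing R] {x y : R} :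
    cozeroAdj x y ↔ ¬ x ∣ y ∧ ¬ y ∣ x := by
  simp only [cozeroAdj, Ideal.mem_span_singleton]
  constructor
  · rintro ⟨-, -, hyx, hxy⟩
    exact ⟨hxy, hyx⟩
  · rintro ⟨hxy, hyx⟩
    have hx : x ≠ 0 ∧ ¬ IsUnit x := ⟨fun h => hyx (h ▸ dvd_zero y), fun h => hxy h.dvd⟩
    have hy : y ≠ 0 ∧ ¬ IsUnit y := ⟨fun h => hxy (h ▸ dvd_zero x), fun h => hyx h.dvd⟩
    exact ⟨hx, hy, hyx, hxy⟩

theorem cozeroAdj.ne {R : Type*} [CommRing R] {x y : R} (h : cozeroAdj x y) : x ≠ y := by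
  rintro rfl
  exact (cozeroAdj_iff_not_dvd.mp h).1 dvd_rfl

theorem cozeroAdj.of_map {R S : Type*} [CommRing R] [CommRing S] (f : R →+* S) {x y : R}
    (h : cozeroAdj (f x) (f y)) : cozeroAdj x y := by
  rw [cozeroAdj_iff_not_dvd] at h ⊢
  exact h.imp (mt (map_dvd f)) (mt (map_dvd f))

section Prod

variable {R S T : Type*} [CommRing R] [CommRing S] [CommRing T] [Nontrivial S] [Nontrivial T]

theorem cozeroAdj_one_zero_zero_one : cozeroAdj ((1, 0) : S × T) (0, 1) := by
  simp [cozeroAdj_iff_not_dvd, prod_dvd_iff]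

theorem cozeroAdj_mk_one_zero_mk_zero_one (a b : R) :
    cozeroAdj ((a, 1, 0) : R × S × T) (b, 0, 1) :=
  .of_map (RingHom.snd R (S × T)) cozeroAdj_one_zero_zero_one

theorem stmt4_general {ι κ : Type*} {u : ι → R} {v : κ → R}
    (hu : Function.Injective u) (hv : Function.Injective v)
    (A : ι → R × S × T) (B : κ → R × S × T)
    (hA : ∀ i, A i = (u i, 1, 0)) (hB : ∀ j, B j = (v j, 0, 1)) :
    Function.Injective A ∧ Function.Injective B ∧ (∀ i j, A i ≠ B j) ∧
      ∀ i j, cozeroAdj (A i) (B j) := by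
  obtain rfl : A = fun i => (u i, 1, 0) := funext hA
  obtain rfl : B = fun j => (v j, 0, 1) := funext hB
  have hadj i j : cozeroAdj ((u i, 1, 0) : R × S × T) (v j, 0, 1) :=
    cozeroAdj_mk_one_zero_mk_zero_one (u i) (v j)
  exact ⟨fun _ _ h => hu (congrArg Prod.fst h), fun _ _ h => hv (congrArg Prod.fst h),
    fun i j => (hadj i j).ne, hadj⟩

end Prod

/-- Let `R₁` be a commutative ring with unity with `|R₁| ≥ 5` and distinct
`u₁, u₂, u₃ ∈ R₁ \ {0,1}`.  Then `Γ'(R₁ × ℤ₂ × ℤ₂)` contains `K_{5,5}` as a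
subgraph with the indicated parts. -/
theorem stmt4 (R₁ : Type*) [CommRing R₁] (hc : 5 ≤ Cardinal.mk R₁)
    (u₁ u₂ u₃ : R₁)
    (hu₁0 : u₁ ≠ 0) (hu₁1 : u₁ ≠ 1) (hu₂0 : u₂ ≠ 0) (hu₂1 : u₂ ≠ 1)
    (hu₃0 : u₃ ≠ 0) (hu₃1 : u₃ ≠ 1)
    (h12 : u₁ ≠ u₂) (h13 : u₁ ≠ u₃) (h23 : u₂ ≠ u₃)
    (A B : Fin 5 → R₁ × ZMod 2 × ZMod 2)
    (hA : A = ![(0, 1, 0), (u₁, 1, 0), (u₂, 1, 0), (u₃, 1, 0), (1, 1, 0)])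
    (hB : B = ![(0, 0, 1), (u₁, 0, 1), (u₂, 0, 1), (u₃, 0, 1), (1, 0, 1)]) :
    Function.Injective A ∧ Function.Injective B ∧ (∀ i j, A i ≠ B j) ∧
      ∀ i j, cozeroAdj (A i) (B j) := by
  have : Nontrivial R₁ := ⟨u₁, 0, hu₁0⟩
  have hu : Function.Injective ![0, u₁, u₂, u₃, 1] :=
    List.nodup_ofFn.mp (by
      simp [hu₁0.symm, hu₂0.symm, hu₃0.symm, hu₁1, hu₂1, hu₃1, h12, h13, h23])
  exact stmt4_general hu hu A B (by simp [hA, Fin.forall_fin_succ])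
    (by simp [hB, Fin.forall_fin_succ])
end

section
/- Let $R_1, R_2$ be commutative local rings with unity whose maximal ideals are principal, generated by $a$ and $b$ respectively, with nilpotent indices $4$ and $3$ (i.e., $a^3 \neq 0$, $a^4 = 0$, $b^2 \neq 0$, $b^3 = 0$). Then $\Gamma_r(R_1 \times R_2)$ contains $K_{5,4}$ as a subgraph, with parts $\{(a^3)\times R_2,\ (a^3)\times(b),\ (0)\times(b),\ (a^2)\times(b),\ (0)\times R_2\}$ and $\{R_1\times(0),\ R_1\times(b^2),\ (a)\times(0),\ (a)\times(b^2)\}$. -/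
/-- Adjacency in the reduced cozero-divisor graph `Γ_r(R)`:
the two ideals are nontrivial principal ideals (vertices of the graph),
they are distinct, and neither is properly contained in the other. -/
def redCozeroAdj {R : Type*} [CommRing R] (I J : Ideal R) : Prop :=
  (I.IsPrincipal ∧ I ≠ ⊥ ∧ I ≠ ⊤) ∧ (J.IsPrincipal ∧ J ≠ ⊥ ∧ J ≠ ⊤) ∧
    I ≠ J ∧ ¬ I < J ∧ ¬ J < I

/-!
If `a` lies in the Jacobson radical and `a ^ m ≠ 0`, then by Nakayama the ideals
`(1) > (a) > ⋯ > (a ^ m) > (0)` form a strict chain. Hence the products of a member of such a chain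
in `R` with a member of such a chain in `S` form a copy of a grid of exponents with its order
reversed, and two of these products are adjacent exactly when their exponents are incomparable. The
complete bipartite subgraph is thereby read off a finite grid.
-/

theorem redCozeroAdj_iff_incompRel {R : Type*} [CommRing R] {I J : Ideal R} :
    redCozeroAdj I J ↔ I.IsPrincipal ∧ J.IsPrincipal ∧ IncompRel (· ≤ ·) I J := by
  constructor
  · rintro ⟨⟨hI, -, -⟩, ⟨hJ, -, -⟩, hne, hIJ, hJI⟩
    exact ⟨hI, hJ, fun h => hIJ (h.lt_of_ne hne), fun h => hJI (h.lt_of_ne hne.symm)⟩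
  · rintro ⟨hI, hJ, hIJ, hJI⟩
    refine ⟨⟨hI, ?_, ?_⟩, ⟨hJ, ?_, ?_⟩, ?_, fun h => hIJ h.le, fun h => hJI h.le⟩
    · rintro rfl; exact hIJ bot_le
    · rintro rfl; exact hJI le_top
    · rintro rfl; exact hJI bot_le
    · rintro rfl; exact hIJ le_top
    · rintro rfl; exact hIJ le_rfl

section PowChain

variable {R : Type*} [CommRing R] {a : R} {n : ℕ}

theorem not_pow_succ_dvd_pow_of_mem_jacobson_bot (ha : a ∈ (⊥ : Ideal R).jacobson)
    (hn : a ^ n ≠ 0) : ¬ a ^ (n + 1) ∣ a ^ n := by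
  rintro ⟨c, hc⟩
  have hunit : IsUnit (a * -c + 1) := Ideal.mem_jacobson_bot.1 ha (-c)
  have hzero : a ^ n * (a * -c + 1) = 0 := by linear_combination hc
  exact hn (hunit.mul_left_eq_zero.1 hzero)

/-- The sequence `1, a, …, a ^ n, 0`, whose terms generate the chain of principal ideals
`(1) ≥ (a) ≥ ⋯ ≥ (a ^ n) ≥ (0)`. The last index is sent to `0` whether or not `a ^ (n + 1) = 0`. -/
def powChain (a : R) (n : ℕ) : Fin (n + 2) → R :=
  Fin.snoc (fun i : Fin (n + 1) => a ^ (i : ℕ)) 0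

theorem strictAnti_span_powChain (ha : a ∈ (⊥ : Ideal R).jacobson) (hn : a ^ n ≠ 0) :
    StrictAnti fun i => Ideal.span {powChain a n i} := by
  refine Fin.strictAnti_iff_succ_lt.2 fun i => ?_
  have hpow : a ^ (i : ℕ) ≠ 0 := fun h => hn (pow_eq_zero_of_le i.is_le h)
  induction i using Fin.lastCases with
  | last =>
    simpa [powChain, bot_lt_iff_ne_bot] using hn
  | cast i =>
    have hle : Ideal.span {a ^ ((i : ℕ) + 1)} ≤ Ideal.span {a ^ (i : ℕ)} :=
      Ideal.span_singleton_le_span_singleton.2 (pow_dvd_pow a (Nat.le_succ i))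
    have hnle : ¬ Ideal.span {a ^ (i : ℕ)} ≤ Ideal.span {a ^ ((i : ℕ) + 1)} := fun h =>
      not_pow_succ_dvd_pow_of_mem_jacobson_bot ha hpow
        (Ideal.span_singleton_le_span_singleton.1 h)
    simpa only [powChain, Fin.succ_castSucc, Fin.snoc_castSucc, Fin.val_succ, Fin.val_castSucc]
      using lt_of_le_not_ge hle hnle

theorem powChain_dvd_powChain_iff (ha : a ∈ (⊥ : Ideal R).jacobson) (hn : a ^ n ≠ 0)
    {i j : Fin (n + 2)} : powChain a n i ∣ powChain a n j ↔ i ≤ j := by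
  rw [← Ideal.span_singleton_le_span_singleton]
  exact (strictAnti_span_powChain ha hn).le_iff_ge

end PowChain

section GridIdeal

variable {R S : Type*} [CommRing R] [CommRing S] {a : R} {b : S} {m n : ℕ}

/-- The principal ideal `(a ^ i) × (b ^ j)` of `R × S` at the grid point `(i, j)`, where the largest
value of either coordinate stands for the zero ideal of its factor. -/
def gridIdeal (a : R) (b : S) (m n : ℕ) (p : Fin (m + 2) × Fin (n + 2)) : Ideal (R × S) :=
  Ideal.span {(powChain a m p.1, powChain b n p.2)}

theorem gridIdeal_le_gridIdeal_iff (ha : a ∈ (⊥ : Ideal R).jacobson) (hm : a ^ m ≠ 0)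
    (hb : b ∈ (⊥ : Ideal S).jacobson) (hn : b ^ n ≠ 0) {p q : Fin (m + 2) × Fin (n + 2)} :
    gridIdeal a b m n p ≤ gridIdeal a b m n q ↔ q ≤ p := by
  rw [gridIdeal, gridIdeal, Ideal.span_singleton_le_span_singleton, prod_dvd_iff,
    powChain_dvd_powChain_iff ha hm, powChain_dvd_powChain_iff hb hn, Prod.le_def]

theorem gridIdeal_injective (ha : a ∈ (⊥ : Ideal R).jacobson) (hm : a ^ m ≠ 0)
    (hb : b ∈ (⊥ : Ideal S).jacobson) (hn : b ^ n ≠ 0) :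
    Function.Injective (gridIdeal a b m n) := fun _ _ h =>
  le_antisymm ((gridIdeal_le_gridIdeal_iff ha hm hb hn).1 h.ge)
    ((gridIdeal_le_gridIdeal_iff ha hm hb hn).1 h.le)

theorem redCozeroAdj_gridIdeal_iff (ha : a ∈ (⊥ : Ideal R).jacobson) (hm : a ^ m ≠ 0)
    (hb : b ∈ (⊥ : Ideal S).jacobson) (hn : b ^ n ≠ 0) {p q : Fin (m + 2) × Fin (n + 2)} :
    redCozeroAdj (gridIdeal a b m n p) (gridIdeal a b m n q) ↔ IncompRel (· ≤ ·) p q := by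
  have hprincipal (r) : (gridIdeal a b m n r).IsPrincipal := ⟨_, rfl⟩
  simp only [redCozeroAdj_iff_incompRel, hprincipal, true_and, IncompRel,
    gridIdeal_le_gridIdeal_iff ha hm hb hn, and_comm]

end GridIdeal

theorem stmt14_general {R₁ R₂ : Type*} [CommRing R₁] [CommRing R₂]
    {a : R₁} (ha : a ∈ (⊥ : Ideal R₁).jacobson) (ha3 : a ^ 3 ≠ 0)
    {b : R₂} (hb : b ∈ (⊥ : Ideal R₂).jacobson) (hb2 : b ^ 2 ≠ 0)
    {A : Fin 5 → Ideal (R₁ × R₂)} {B : Fin 4 → Ideal (R₁ × R₂)}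
    (hA : A = ![Ideal.span {(a ^ 3, (1 : R₂))}, Ideal.span {(a ^ 3, b)},
                Ideal.span {((0 : R₁), b)}, Ideal.span {(a ^ 2, b)},
                Ideal.span {((0 : R₁), (1 : R₂))}])
    (hB : B = ![Ideal.span {((1 : R₁), (0 : R₂))}, Ideal.span {((1 : R₁), b ^ 2)},
                Ideal.span {(a, (0 : R₂))}, Ideal.span {(a, b ^ 2)}]) :
    Function.Injective A ∧ Function.Injective B ∧ (∀ i j, A i ≠ B j) ∧
      ∀ i j, redCozeroAdj (A i) (B j) := by
  let p : Fin 5 → Fin 5 × Fin 4 := ![(3, 0), (3, 1), (4, 1), (2, 1), (4, 0)]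
  let q : Fin 4 → Fin 5 × Fin 4 := ![(0, 3), (0, 2), (1, 3), (1, 2)]
  have hAp : A = gridIdeal a b 3 2 ∘ p := by
    subst hA; ext1 i; fin_cases i <;> simp [p, gridIdeal, powChain, Fin.snoc]
  have hBq : B = gridIdeal a b 3 2 ∘ q := by
    subst hB; ext1 j; fin_cases j <;> simp [q, gridIdeal, powChain, Fin.snoc]
  have hinj := gridIdeal_injective ha ha3 hb hb2
  have hadj (i j) : redCozeroAdj (A i) (B j) := by
    have hincomp : ∀ i j, ¬ p i ≤ q j ∧ ¬ q j ≤ p i := by decide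
    rw [hAp, hBq]
    exact (redCozeroAdj_gridIdeal_iff ha ha3 hb hb2).2 (hincomp i j)
  refine ⟨?_, ?_, fun i j => (hadj i j).2.2.1, hadj⟩
  · exact hAp ▸ hinj.comp (by decide)
  · exact hBq ▸ hinj.comp (by decide)

/-- Let `R₁, R₂` be commutative local rings whose maximal ideals are principal,
generated by `a` resp. `b`, with nilpotent indices `4` and `3`.  Then
`Γ_r(R₁ × R₂)` contains `K_{5,4}` as a subgraph with parts
`{(a³)×R₂, (a³)×(b), (0)×(b), (a²)×(b), (0)×R₂}` and
`{R₁×(0), R₁×(b²), (a)×(0), (a)×(b²)}`. -/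
theorem stmt14 (R₁ R₂ : Type*) [CommRing R₁] [CommRing R₂]
    [IsLocalRing R₁] [IsLocalRing R₂]
    (a : R₁) (hmaxa : IsLocalRing.maximalIdeal R₁ = Ideal.span {a})
    (ha3 : a ^ 3 ≠ 0) (ha4 : a ^ 4 = 0)
    (b : R₂) (hmaxb : IsLocalRing.maximalIdeal R₂ = Ideal.span {b})
    (hb2 : b ^ 2 ≠ 0) (hb3 : b ^ 3 = 0)
    (A : Fin 5 → Ideal (R₁ × R₂)) (B : Fin 4 → Ideal (R₁ × R₂))
    (hA : A = ![Ideal.span {(a ^ 3, (1 : R₂))}, Ideal.span {(a ^ 3, b)},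
                Ideal.span {((0 : R₁), b)}, Ideal.span {(a ^ 2, b)},
                Ideal.span {((0 : R₁), (1 : R₂))}])
    (hB : B = ![Ideal.span {((1 : R₁), (0 : R₂))}, Ideal.span {((1 : R₁), b ^ 2)},
                Ideal.span {(a, (0 : R₂))}, Ideal.span {(a, b ^ 2)}]) :
    Function.Injective A ∧ Function.Injective B ∧ (∀ i j, A i ≠ B j) ∧
      ∀ i j, redCozeroAdj (A i) (B j) := by
  have ha : a ∈ (⊥ : Ideal R₁).jacobson := Ideal.radical_le_jacobson ⟨4, ha4⟩
  have hb : b ∈ (⊥ : Ideal R₂).jacobson := Ideal.radical_le_jacobson ⟨3, hb3⟩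
  exact stmt14_general ha ha3 hb hb2 hA hB
end

section
/- Let $R_1$ be a commutative ring with unity containing elements $a_1, a_2, a_3, a_4$ whose principal ideals are pairwise incomparable, i.e., $(a_i) \not\subseteq (a_j)$ for all distinct $i, j \in \{1,2,3,4\}$, and let $F$ be a field. Then $\Gamma_r(R_1 \times F)$ contains the complete graph $K_5$ as a subgraph, on the five vertices $(a_1)\times(0),\ (a_2)\times(0),\ (a_3)\times(0),\ (a_4)\times(0),\ (0)\times F$. -/
section Ring

variable {R : Type*} [CommRing R]

theorem redCozeroAdj.ne {I J : Ideal R} (h : redCozeroAdj I J) : I ≠ J :=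
  h.2.2.1

theorem redCozeroAdj.symm {I J : Ideal R} (h : redCozeroAdj I J) : redCozeroAdj J I :=
  ⟨h.2.1, h.1, h.ne.symm, h.2.2.2.2, h.2.2.2.1⟩

-- Incomparability already forces both ideals to be proper and nonzero, since `⊥` and `⊤` are
-- comparable with every ideal.
theorem redCozeroAdj_iff {I J : Ideal R} :
    redCozeroAdj I J ↔ I.IsPrincipal ∧ J.IsPrincipal ∧ ¬ I ≤ J ∧ ¬ J ≤ I := by
  constructor
  · rintro ⟨⟨hI, -⟩, ⟨hJ, -⟩, hne, hIJ, hJI⟩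
    exact ⟨hI, hJ, fun h ↦ hIJ (h.lt_of_ne hne), fun h ↦ hJI (h.lt_of_ne hne.symm)⟩
  · rintro ⟨hI, hJ, hIJ, hJI⟩
    refine ⟨⟨hI, ?_, ?_⟩, ⟨hJ, ?_, ?_⟩, fun h ↦ hIJ h.le, fun h ↦ hIJ h.le, fun h ↦ hJI h.le⟩
    · exact fun h ↦ hIJ (h ▸ bot_le)
    · exact fun h ↦ hJI (h ▸ le_top)
    · exact fun h ↦ hJI (h ▸ bot_le)
    · exact fun h ↦ hIJ (h ▸ le_top)

theorem redCozeroAdj_span_singleton_iff {x y : R} :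
    redCozeroAdj (Ideal.span {x}) (Ideal.span {y}) ↔ ¬ y ∣ x ∧ ¬ x ∣ y := by
  have isPrincipal (z : R) : (Ideal.span {z}).IsPrincipal := ⟨z, rfl⟩
  simp only [redCozeroAdj_iff, isPrincipal, true_and, Ideal.span_singleton_le_span_singleton]

theorem ne_zero_of_redCozeroAdj_span_singleton {x : R} {J : Ideal R}
    (h : redCozeroAdj (Ideal.span {x}) J) : x ≠ 0 :=
  fun hx ↦ h.1.2.1 (Ideal.span_singleton_eq_bot.mpr hx)

end Ring

section Prod

variable {R S : Type*} [CommRing R] [CommRing S]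

theorem redCozeroAdj_span_mk_zero_iff {x y : R} :
    redCozeroAdj (Ideal.span {(x, (0 : S))}) (Ideal.span {(y, (0 : S))}) ↔
      redCozeroAdj (Ideal.span {x}) (Ideal.span {y}) := by
  simp only [redCozeroAdj_span_singleton_iff, prod_dvd_iff, dvd_refl, and_true]

theorem redCozeroAdj_span_mk_zero_span_zero_mk_iff {x : R} {y : S} :
    redCozeroAdj (Ideal.span {(x, (0 : S))}) (Ideal.span {((0 : R), y)}) ↔ x ≠ 0 ∧ y ≠ 0 := by
  simp only [redCozeroAdj_span_singleton_iff, prod_dvd_iff, zero_dvd_iff, dvd_zero, and_true,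
    true_and, ne_eq]

theorem stmt16_general [Nontrivial S] {n : ℕ} (a : Fin (n + 2) → R)
    (hinc : ∀ i j, i ≠ j → ¬ Ideal.span {a i} ≤ Ideal.span {a j})
    (v : Fin (n + 3) → Ideal (R × S))
    (hv : v = Fin.snoc (fun i ↦ Ideal.span {(a i, (0 : S))}) (Ideal.span {((0 : R), (1 : S))})) :
    Function.Injective v ∧ ∀ i j, i ≠ j → redCozeroAdj (v i) (v j) := by
  have adj_span (i j) (hij : i ≠ j) : redCozeroAdj (Ideal.span {a i}) (Ideal.span {a j}) :=
    redCozeroAdj_iff.mpr ⟨⟨a i, rfl⟩, ⟨a j, rfl⟩, hinc i j hij, hinc j i hij.symm⟩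
  have ne_zero (i) : a i ≠ 0 :=
    have ⟨j, hji⟩ := exists_ne i
    ne_zero_of_redCozeroAdj_span_singleton (adj_span i j hji.symm)
  have adj_castSucc_last (i : Fin (n + 2)) : redCozeroAdj (v i.castSucc) (v (Fin.last _)) := by
    simpa only [hv, Fin.snoc_castSucc, Fin.snoc_last] using
      redCozeroAdj_span_mk_zero_span_zero_mk_iff.mpr ⟨ne_zero i, one_ne_zero⟩
  have adj (i j) (hij : i ≠ j) : redCozeroAdj (v i) (v j) := by
    rcases Fin.eq_castSucc_or_eq_last i with ⟨i, rfl⟩ | rfl <;>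
      rcases Fin.eq_castSucc_or_eq_last j with ⟨j, rfl⟩ | rfl
    · simpa only [hv, Fin.snoc_castSucc] using
        redCozeroAdj_span_mk_zero_iff.mpr (adj_span i j (ne_of_apply_ne Fin.castSucc hij))
    · exact adj_castSucc_last i
    · exact (adj_castSucc_last j).symm
    · exact absurd rfl hij
  exact ⟨Function.injective_iff_pairwise_ne.mpr fun i j hij ↦ (adj i j hij).ne, adj⟩

end Prod

/-- Let `R₁` be a commutative ring containing `a₁, a₂, a₃, a₄` whose principal
ideals are pairwise incomparable, and let `F` be a field.  Then `Γ_r(R₁ × F)`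
contains `K₅` as a subgraph on the vertices
`(a₁)×(0), (a₂)×(0), (a₃)×(0), (a₄)×(0), (0)×F`. -/
theorem stmt16 (R₁ F : Type*) [CommRing R₁] [Field F]
    (a : Fin 4 → R₁)
    (hinc : ∀ i j, i ≠ j → ¬ Ideal.span {a i} ≤ Ideal.span {a j})
    (v : Fin 5 → Ideal (R₁ × F))
    (hv : v = ![Ideal.span {(a 0, (0 : F))}, Ideal.span {(a 1, (0 : F))},
                Ideal.span {(a 2, (0 : F))}, Ideal.span {(a 3, (0 : F))},
                Ideal.span {((0 : R₁), (1 : F))}]) :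
    Function.Injective v ∧ ∀ i j, i ≠ j → redCozeroAdj (v i) (v j) := by
  exact stmt16_general a hinc v (hv.trans (by ext1 i; fin_cases i <;> rfl))
end
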